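/- Fix a node i, a class c, a learning rate η > 0, and current weights W[t] = (W^{(0)}[t], …, W^{(L)}[t]). Let ε ∈ ℝ^{|B|×C} have rows ε_m = softmax(Z(W[t])_m) - onehot(Y_m) for m ∈ B, and perform the gradient step W^{(l)}[t+1] = W^{(l)}[t] - η ((P_sym^l X)_B)^T ε for every 0 ≤ l ≤ L, where (P_sym^l X)_B is the submatrix of rows of P_sym^l X indexed by B. Define χ̃^{(l)} ∈ ℝ^{|B|} by (χ̃^{(l)})_m = √(D_{mm}) Σ_{j,k} (P_rw^l)_{ij} (P_rw^l)_{mk} (D_{jj} D_{kk})^{-1/2} ⟨X_j, X_k⟩. Then |ℓ(Z(W[t+1])_i, c) - ℓ(Z(W[t])_i, c)| ≤ √(D_{ii}) · √2 · η · ‖ε‖_F · Σ_{l=0}^{L} ‖χ̃^{(l)}‖₂, where ‖·‖_F is the Frobenius norm. -/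

import Mathlib

open Finset

/-- The softmax function on `ℝ^C`. -/
noncomputable def softmax {C : ℕ} (z : Fin C → ℝ) (c : Fin C) : ℝ :=
  Real.exp (z c) / ∑ b, Real.exp (z b)

/-- Cross-entropy loss of logits `z` with respect to class `c`. -/
noncomputable def xent {C : ℕ} (z : Fin C → ℝ) (c : Fin C) : ℝ :=
  - Real.log (softmax z c)

theorem aux_one_side {C : ℕ} (z w : Fin C → ℝ) (c : Fin C) :
    xent w c - xent z c ≤ Real.sqrt 2 * Real.sqrt (∑ q, (w q - z q) ^ 2) := by
  have hx : ∀ z : Fin C → ℝ, 0 < ∑ b, Real.exp (z b) := fun z =>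
    Finset.sum_pos (fun b _ => Real.exp_pos _) ⟨c, Finset.mem_univ c⟩
  have hxe : ∀ z : Fin C → ℝ, xent z c = Real.log (∑ b, Real.exp (z b)) - z c := by
    intro z
    unfold xent softmax
    rw [Real.log_div (Real.exp_pos _).ne' (hx z).ne', Real.log_exp]
    ring
  obtain ⟨k, -, hk⟩ := Finset.exists_max_image Finset.univ (fun q => w q - z q)
    ⟨c, Finset.mem_univ c⟩
  have h1 : ∑ b, Real.exp (w b) ≤ Real.exp (w k - z k) * ∑ b, Real.exp (z b) := by
    rw [Finset.mul_sum]
    refine Finset.sum_le_sum fun b _ => ?_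
    rw [← Real.exp_add]
    apply Real.exp_le_exp.mpr
    have := hk b (Finset.mem_univ b)
    linarith
  have h2 := Real.log_le_log (hx w) h1
  rw [Real.log_mul (Real.exp_pos _).ne' (hx z).ne', Real.log_exp] at h2
  have h3 : xent w c - xent z c ≤ (w k - z k) - (w c - z c) := by
    rw [hxe, hxe]; linarith
  refine h3.trans ?_
  rw [← Real.sqrt_mul (by norm_num)]
  apply Real.le_sqrt_of_sq_le
  by_cases hkc : k = c
  · subst hkc
    have : 0 ≤ ∑ q, (w q - z q) ^ 2 := Finset.sum_nonneg fun _ _ => sq_nonneg _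
    simpa using this
  · have h4 : ∑ q ∈ {k, c}, (w q - z q) ^ 2 ≤ ∑ q, (w q - z q) ^ 2 :=
      Finset.sum_le_sum_of_subset_of_nonneg (Finset.subset_univ _) fun _ _ _ => sq_nonneg _
    rw [Finset.sum_pair hkc] at h4
    nlinarith [sq_nonneg ((w k - z k) + (w c - z c))]

theorem aux_lip {C : ℕ} (z w : Fin C → ℝ) (c : Fin C) :
    |xent w c - xent z c| ≤ Real.sqrt 2 * Real.sqrt (∑ q, (w q - z q) ^ 2) := by
  rw [abs_le]
  have h1 := aux_one_side z w c
  have h2 := aux_one_side w z c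
  have h3 : ∑ q, (z q - w q) ^ 2 = ∑ q, (w q - z q) ^ 2 :=
    Finset.sum_congr rfl fun _ _ => by ring
  rw [h3] at h2
  constructor <;> linarith

theorem aux_tri {b : ℕ} (s : Finset ℕ) (χ : ℕ → Fin b → ℝ) :
    Real.sqrt (∑ m, (∑ l ∈ s, χ l m) ^ 2) ≤ ∑ l ∈ s, Real.sqrt (∑ m, (χ l m) ^ 2) := by
  have h := norm_sum_le s (fun l => (WithLp.toLp 2 (χ l) : EuclideanSpace ℝ (Fin b)))
  simpa [EuclideanSpace.norm_eq] using h

theorem aux_pow {N : ℕ} (A : Matrix (Fin N) (Fin N) ℝ) (deg : Fin N → ℝ)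
    (hdegpos : ∀ i, 0 < deg i)
    (Prw : Matrix (Fin N) (Fin N) ℝ) (hPrw : ∀ i j, Prw i j = A i j / deg i)
    (Psym : Matrix (Fin N) (Fin N) ℝ)
    (hPsym : ∀ i j, Psym i j = A i j / (Real.sqrt (deg i) * Real.sqrt (deg j))) (l : ℕ) :
    ∀ i j, (Psym ^ l) i j = Real.sqrt (deg i) * (Prw ^ l) i j * (Real.sqrt (deg j))⁻¹ := by
  have hs : ∀ i, 0 < Real.sqrt (deg i) := fun i => Real.sqrt_pos.mpr (hdegpos i)
  induction l with
  | zero =>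
    intro i j
    by_cases h : i = j
    · subst h
      simp [(hs i).ne']
    · simp [h]
  | succ n ih =>
    intro i j
    rw [pow_succ, pow_succ, Matrix.mul_apply, Matrix.mul_apply, Finset.mul_sum, Finset.sum_mul]
    refine Finset.sum_congr rfl fun k _ => ?_
    rw [ih, hPsym, hPrw]
    have h1 := (hs k).ne'
    have h2 := (hs j).ne'
    have h3 : deg k = Real.sqrt (deg k) * Real.sqrt (deg k) :=
      (Real.mul_self_sqrt (hdegpos k).le).symm
    generalize Real.sqrt (deg k) = a at *
    rw [h3]
    field_simp

/-- Theorem 5, SYM training step: after one gradient-descent step on the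
batch loss of the linearized SYM model, the change in cross-entropy loss at node `i`
is bounded by `√(D_ii) · √2 · η · ‖ε‖_F · Σ_l ‖χ̃^{(l)}‖₂`. -/
theorem sym_training_step_bound {N d C b : ℕ} (hC : 2 ≤ C)
    (A : Matrix (Fin N) (Fin N) ℝ)
    (hA01 : ∀ i j, A i j = 0 ∨ A i j = 1)
    (hAsymm : A.IsSymm)
    (deg : Fin N → ℝ) (hdeg : ∀ i, deg i = ∑ j, A i j)
    (hdegpos : ∀ i, 0 < deg i)
    (Prw : Matrix (Fin N) (Fin N) ℝ) (hPrw : ∀ i j, Prw i j = A i j / deg i)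
    (Psym : Matrix (Fin N) (Fin N) ℝ)
    (hPsym : ∀ i j, Psym i j = A i j / (Real.sqrt (deg i) * Real.sqrt (deg j)))
    (X : Matrix (Fin N) (Fin d) ℝ)
    (idx : Fin b → Fin N) (hidx : Function.Injective idx)
    (Y : Fin b → Fin C)
    (i : Fin N) (c : Fin C) (η : ℝ) (hη : 0 < η) (L : ℕ)
    (Wt : ℕ → Fin d → Fin C → ℝ)
    -- the linearized SYM model
    (Zf : (ℕ → Fin d → Fin C → ℝ) → Fin N → Fin C → ℝ)
    (hZf : ∀ W' n c', Zf W' n c' =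
      ∑ l ∈ range (L + 1), ∑ p, (Psym ^ l * X) n p * W' l p c')
    -- the residual matrix at step t
    (ε : Fin b → Fin C → ℝ)
    (hε : ∀ m q, ε m q = softmax (Zf Wt (idx m)) q - (if q = Y m then (1 : ℝ) else 0))
    -- the weights after one gradient step
    (Wt1 : ℕ → Fin d → Fin C → ℝ)
    (hWt1 : ∀ l ≤ L, ∀ p q, Wt1 l p q =
      Wt l p q - η * ∑ m, (Psym ^ l * X) (idx m) p * ε m q)
    -- the expected neighborhood-similarity vectors
    (χ : ℕ → Fin b → ℝ)
    (hχ : ∀ l m, χ l m = Real.sqrt (deg (idx m)) *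
      ∑ j, ∑ k, (Prw ^ l) i j * (Prw ^ l) (idx m) k *
        (Real.sqrt (deg j) * Real.sqrt (deg k))⁻¹ * ∑ r, X j r * X k r) :
    |xent (Zf Wt1 i) c - xent (Zf Wt i) c| ≤
      Real.sqrt (deg i) * Real.sqrt 2 * η *
        Real.sqrt (∑ m, ∑ q, (ε m q) ^ 2) *
        ∑ l ∈ range (L + 1), Real.sqrt (∑ m, (χ l m) ^ 2) := by
  have hpow := aux_pow A deg hdegpos Prw hPrw Psym hPsym
  have hK : ∀ l m, ∑ p, (Psym ^ l * X) i p * (Psym ^ l * X) (idx m) p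
      = Real.sqrt (deg i) * χ l m := by
    intro l m
    rw [hχ]
    simp only [Matrix.mul_apply, Finset.sum_mul_sum, hpow l]
    rw [Finset.sum_comm]
    simp only [Finset.mul_sum]
    refine Finset.sum_congr rfl fun j _ => ?_
    rw [Finset.sum_comm]
    refine Finset.sum_congr rfl fun k _ => Finset.sum_congr rfl fun r _ => ?_
    rw [mul_inv]
    ring
  have hδ : ∀ q, Zf Wt1 i q - Zf Wt i q =
      -(η * Real.sqrt (deg i)) * ∑ m, (∑ l ∈ range (L + 1), χ l m) * ε m q := by
    intro q
    rw [hZf, hZf, ← Finset.sum_sub_distrib]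
    have h1 : ∀ l ∈ range (L + 1), (∑ p, (Psym ^ l * X) i p * Wt1 l p q -
        ∑ p, (Psym ^ l * X) i p * Wt l p q) =
        -(η * Real.sqrt (deg i)) * ∑ m, χ l m * ε m q := by
      intro l hl
      have hl' : l ≤ L := Nat.lt_succ_iff.mp (Finset.mem_range.mp hl)
      have h2 : -(η * Real.sqrt (deg i)) * ∑ m, χ l m * ε m q =
          -η * ∑ m, (∑ p, (Psym ^ l * X) i p * (Psym ^ l * X) (idx m) p) * ε m q := by
        simp only [hK, Finset.mul_sum]
        exact Finset.sum_congr rfl fun m _ => by ring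
      rw [h2, ← Finset.sum_sub_distrib]
      simp only [Finset.sum_mul]
      rw [Finset.sum_comm, Finset.mul_sum]
      refine Finset.sum_congr rfl fun p _ => ?_
      rw [hWt1 l hl', mul_sub, sub_sub_cancel_left]
      simp only [Finset.mul_sum, ← Finset.sum_neg_distrib]
      exact Finset.sum_congr rfl fun m _ => by ring
    rw [Finset.sum_congr rfl h1, ← Finset.mul_sum, Finset.sum_comm]
    simp only [Finset.sum_mul]
  have hsq : Real.sqrt (∑ q, (Zf Wt1 i q - Zf Wt i q) ^ 2) ≤
      η * Real.sqrt (deg i) * (Real.sqrt (∑ m, (∑ l ∈ range (L + 1), χ l m) ^ 2) *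
        Real.sqrt (∑ m, ∑ q, (ε m q) ^ 2)) := by
    rw [← Real.sqrt_mul (Finset.sum_nonneg fun _ _ => sq_nonneg _)]
    have h0 : 0 ≤ η * Real.sqrt (deg i) := by positivity
    rw [← Real.sqrt_sq h0, ← Real.sqrt_mul (sq_nonneg _)]
    apply Real.sqrt_le_sqrt
    rw [Finset.sum_comm (f := fun m q => (ε m q) ^ 2), Finset.mul_sum, Finset.mul_sum]
    refine Finset.sum_le_sum fun q _ => ?_
    rw [hδ, mul_pow, neg_sq]
    exact mul_le_mul_of_nonneg_left (Finset.sum_mul_sq_le_sq_mul_sq _ _ _) (sq_nonneg _)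
  have htri := aux_tri (range (L + 1)) χ
  calc |xent (Zf Wt1 i) c - xent (Zf Wt i) c|
      ≤ Real.sqrt 2 * Real.sqrt (∑ q, (Zf Wt1 i q - Zf Wt i q) ^ 2) := aux_lip _ _ _
    _ ≤ Real.sqrt 2 * (η * Real.sqrt (deg i) *
        ((∑ l ∈ range (L + 1), Real.sqrt (∑ m, (χ l m) ^ 2)) *
        Real.sqrt (∑ m, ∑ q, (ε m q) ^ 2))) := by
        refine mul_le_mul_of_nonneg_left (hsq.trans ?_) (Real.sqrt_nonneg _)
        gcongr
    _ = _ := by ring
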